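/- Let r_k > 0 (k ≥ 2) be step ratios, and let the BDF2 kernels be d^{(2,n)}_0 = d₀(r_n,0), d^{(2,n)}_1 = d₁(r_n,0), and d^{(2,n)}_j = 0 for j ≥ 2 (n ≥ 2). Then the DOC kernels ϑ^{(2,n)}_{n−j}, defined by ϑ^{(2,n)}_0 = 1/d^{(2,n)}_0 and ϑ^{(2,n)}_{n−j} = −(1/d^{(2,j)}_0)·Σ_{i=j+1}^{n} ϑ^{(2,n)}_{n−i} d^{(2,i)}_{i−j} for 2 ≤ j ≤ n−1, admit the explicit formula ϑ^{(2,n)}_{n−j} = (1/d^{(2,j)}_0)·∏_{i=j+1}^{n} r_i/(1+2r_i) > 0 for all 2 ≤ j ≤ n. -/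

import Mathlib

/-- BDF coefficient function `d₀(x,y)`; note `d₀(r,0) = (1+2r)/(1+r)`. -/
noncomputable def d0 (x y : ℝ) : ℝ := (1 + 2*x)/(1 + x) + x*y/(1 + y + x*y)

/-- BDF coefficient function `d₁(x,y)`; note `d₁(r,0) = -r/(1+r)`. -/
noncomputable def d1 (x y : ℝ) : ℝ :=
  -(x/(1 + x)) - x*y/(1 + y + x*y) - (x*y^2/(1 + y + x*y)) * ((1 + x)/(1 + y))

/-- The BDF2 kernels `d^{(2,n)}_j`: `d^{(2,n)}_0 = d₀(r_n,0)`, `d^{(2,n)}_1 = d₁(r_n,0)`,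
and `d^{(2,n)}_j = 0` for `j ≥ 2`. -/
noncomputable def dk2 (r : ℕ → ℝ) (n j : ℕ) : ℝ :=
  if j = 0 then d0 (r n) 0 else if j = 1 then d1 (r n) 0 else 0

/-- Explicit formula and positivity for the BDF2 DOC kernels (Lemma 2.1):
writing `ϑ n j` for `ϑ^{(2,n)}_{n-j}`, defined by `ϑ^{(2,n)}_0 = 1/d^{(2,n)}_0` and the
recursion `ϑ^{(2,n)}_{n-j} = -(1/d^{(2,j)}_0) Σ_{i=j+1}^n ϑ^{(2,n)}_{n-i} d^{(2,i)}_{i-j}`,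
one has `ϑ^{(2,n)}_{n-j} = (1/d^{(2,j)}_0) ∏_{i=j+1}^n r_i/(1+2r_i) > 0` for `2 ≤ j ≤ n`. -/
theorem bdf2_doc_formula
    (r : ℕ → ℝ) (hr : ∀ k, 2 ≤ k → 0 < r k)
    (ϑ : ℕ → ℕ → ℝ)
    (hϑdiag : ∀ n, 2 ≤ n → ϑ n n = 1 / dk2 r n 0)
    (hϑrec : ∀ n j, 2 ≤ j → j < n →
      ϑ n j = -(1 / dk2 r j 0) * ∑ i ∈ Finset.Icc (j+1) n, ϑ n i * dk2 r i (i - j)) :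
    ∀ n j, 2 ≤ j → j ≤ n →
      ϑ n j = (1 / dk2 r j 0) * ∏ i ∈ Finset.Icc (j+1) n, r i / (1 + 2 * r i)
        ∧ 0 < ϑ n j := by
  have hd : ∀ k, dk2 r k 0 = (1 + 2 * r k) / (1 + r k) := by
    intro k
    simp [dk2, d0]
  have hd1 : ∀ k, dk2 r k 1 = -(r k / (1 + r k)) := by
    intro k
    simp [dk2, d1]
  have hpos : ∀ k, 2 ≤ k → 0 < dk2 r k 0 := by
    intro k hk
    have := hr k hk
    rw [hd]
    positivity
  intro n j hj hjn
  have key : ϑ n j = (1 / dk2 r j 0) * ∏ i ∈ Finset.Icc (j+1) n, r i / (1 + 2 * r i) := by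
    induction hjn using Nat.decreasingInduction with
    | self => simp [hϑdiag n hj]
    | of_succ j hlt ih =>
      have hlt' : j + 1 ≤ n := hlt
      have h1 := ih (by omega)
      have hs : ∑ i ∈ Finset.Icc (j+1) n, ϑ n i * dk2 r i (i - j)
          = ϑ n (j+1) * dk2 r (j+1) 1 := by
        rw [Finset.sum_eq_single (j+1)]
        · simp
        · intro b hb hne
          rw [Finset.mem_Icc] at hb
          have h2 : b - j ≠ 0 := by omega
          have h3 : b - j ≠ 1 := by omega
          simp [dk2, h2, h3]
        · intro h
          exact absurd (Finset.mem_Icc.2 ⟨le_rfl, hlt'⟩) h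
      have hp : ∏ i ∈ Finset.Icc (j+1) n, r i / (1 + 2 * r i)
          = r (j+1) / (1 + 2 * r (j+1)) * ∏ i ∈ Finset.Icc (j+1+1) n, r i / (1 + 2 * r i) := by
        rw [← Finset.insert_Icc_add_one_left_eq_Icc hlt', Finset.prod_insert (by simp)]
      rw [hϑrec n j hj (by omega), hs, hp, h1, hd1, hd (j+1)]
      have := hr (j+1) (by omega)
      have h4 : 1 + r (j+1) ≠ 0 := by positivity
      have h5 : 1 + 2 * r (j+1) ≠ 0 := by positivity
      field_simp
  refine ⟨key, ?_⟩
  rw [key]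
  refine mul_pos (one_div_pos.2 (hpos j hj)) (Finset.prod_pos ?_)
  intro i hi
  rw [Finset.mem_Icc] at hi
  have := hr i (by omega)
  positivity
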